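/- Let G=(V,E) be an oriented 3-edge-connected cubic graph with a peripheral cycle C with |V(C)| = q. Then for every function f: E → Z/2 × Z/3 there exist at least 2^{2q/3} flows φ: E → Z/2 × Z/3 with φ(e) ≠ f(e) for every e ∈ E. -/

import Mathlib

open scoped Classical

/-- A multigraph with an orientation: each edge `e` has a source `src e` and a target `tgt e`.
Loops and parallel edges are allowed. -/
structure Multigraph (V E : Type) where
  src : E → V
  tgt : E → V

namespace Multigraph

variable {V E : Type}

/-- `u` and `v` are joined by some edge satisfying the predicate `P`. -/
def adjVia (G : Multigraph V E) (P : E → Prop) (u v : V) : Prop :=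
  ∃ e, P e ∧ ((G.src e = u ∧ G.tgt e = v) ∨ (G.src e = v ∧ G.tgt e = u))

/-- `v` is reachable from `u` using only edges satisfying `P`. -/
def Reaches (G : Multigraph V E) (P : E → Prop) : V → V → Prop :=
  Relation.ReflTransGen (G.adjVia P)

/-- The graph is connected when only edges satisfying `P` are kept (all edges deleted
whose predicate fails, all vertices kept). -/
def ConnectedVia (G : Multigraph V E) (P : E → Prop) : Prop :=
  Nonempty V ∧ ∀ u v : V, G.Reaches P u v

def Connected (G : Multigraph V E) : Prop :=
  G.ConnectedVia fun _ => True

/-- `G` is `k`-edge-connected: it is connected and has no edge cut of size less than `k`;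
equivalently, deleting any set of fewer than `k` edges leaves it connected. -/
def EdgeConnected (G : Multigraph V E) (k : ℕ) : Prop :=
  ∀ S : Set E, S.ncard < k → G.ConnectedVia fun e => e ∉ S

/-- The degree of a vertex (loops counted twice). -/
noncomputable def degree (G : Multigraph V E) (v : V) : ℕ :=
  {e | G.src e = v}.ncard + {e | G.tgt e = v}.ncard

/-- Every vertex has degree exactly 3. -/
def Cubic (G : Multigraph V E) : Prop :=
  ∀ v : V, G.degree v = 3

/-- `φ : E → Γ` is a flow: at every vertex, the sum over outgoing edges equals the
sum over incoming edges. -/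
def IsFlow [Fintype E] {Γ : Type} [AddCommGroup Γ] (G : Multigraph V E) (φ : E → Γ) : Prop :=
  ∀ v : V, (∑ e : E, if G.src e = v then φ e else 0) = ∑ e : E, if G.tgt e = v then φ e else 0

/-- The vertex `v` is an endpoint of some edge of `C`. -/
def touches (G : Multigraph V E) (C : Set E) (v : V) : Prop :=
  ∃ e ∈ C, G.src e = v ∨ G.tgt e = v

/-- An edge set `C` is (the edge set of) a cycle: it is nonempty, every vertex it touches
has degree exactly 2 in it, and it is connected. -/
def IsCycle (G : Multigraph V E) (C : Set E) : Prop :=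
  C.Nonempty ∧
  (∀ v : V, G.touches C v →
    ({e ∈ C | G.src e = v}.ncard + {e ∈ C | G.tgt e = v}.ncard = 2)) ∧
  (∀ u v : V, G.touches C u → G.touches C v → G.Reaches (· ∈ C) u v)

/-- `R` is `k`-closed: every cycle with at least one edge outside `R` has at least
`k+1` edges outside `R`. -/
def Closed (G : Multigraph V E) (k : ℕ) (R : Set E) : Prop :=
  ∀ C : Set E, G.IsCycle C → (C \ R).Nonempty → k + 1 ≤ (C \ R).ncard

/-- The `k`-closure `⟨S⟩ₖ` of `S` : the minimal `k`-closed set containing `S`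
(the family of `k`-closed sets is closed under intersections). -/
def kClosure (G : Multigraph V E) (k : ℕ) (S : Set E) : Set E :=
  ⋂₀ {R : Set E | S ⊆ R ∧ G.Closed k R}

/-- `S` is a `k`-base: its `k`-closure is the whole edge set. -/
def IsBase (G : Multigraph V E) (k : ℕ) (S : Set E) : Prop :=
  G.kClosure k S = Set.univ

/-- An edge set `S` is peripheral if `G − S` is connected. -/
def Peripheral (G : Multigraph V E) (S : Set E) : Prop :=
  G.ConnectedVia fun e => e ∉ S

/-- The spanning subgraph `(V, F)` is a forest, i.e. contains no cycle. -/
def IsForest (G : Multigraph V E) (F : Set E) : Prop :=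
  ∀ C : Set E, G.IsCycle C → ¬ C ⊆ F

/-- `vs`, `es` describe a path: distinct vertices `vs 0, …, vs n` and distinct edges
`es 0, …, es (n-1)` where `es i` joins `vs i` and `vs (i+1)`. -/
def IsPath (G : Multigraph V E) {n : ℕ} (vs : Fin (n + 1) → V) (es : Fin n → E) : Prop :=
  Function.Injective vs ∧ Function.Injective es ∧
  ∀ i : Fin n,
    (G.src (es i) = vs i.castSucc ∧ G.tgt (es i) = vs i.succ) ∨
    (G.src (es i) = vs i.succ ∧ G.tgt (es i) = vs i.castSucc)

/-- The edge `e` has `y` as one endpoint and its other endpoint in `X`,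
i.e. `e ∈ E(y, X)`. -/
def joins (G : Multigraph V E) (e : E) (y : V) (X : Set V) : Prop :=
  (G.src e = y ∧ G.tgt e ∈ X) ∨ (G.tgt e = y ∧ G.src e ∈ X)

/-- `W` is the vertex set of a connected component of `G − X`. -/
def IsComponent (G : Multigraph V E) (X W : Set V) : Prop :=
  W.Nonempty ∧ Disjoint W X ∧
  (∀ u ∈ W, ∀ v : V, v ∉ X → G.adjVia (fun _ => True) u v → v ∈ W) ∧
  (∀ u ∈ W, ∀ v ∈ W, G.Reaches (fun e => G.src e ∉ X ∧ G.tgt e ∉ X) u v)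

/-- The subgraph induced on `W`, with only those of its edges satisfying `P` kept,
is connected. -/
def ConnectedOn (G : Multigraph V E) (W : Set V) (P : E → Prop) : Prop :=
  ∀ u ∈ W, ∀ v ∈ W, G.Reaches (fun e => P e ∧ G.src e ∈ W ∧ G.tgt e ∈ W) u v

/-- The subgraph induced on `W` is `k`-edge-connected. -/
def EdgeConnectedOn (G : Multigraph V E) (W : Set V) (k : ℕ) : Prop :=
  ∀ S : Set E, S.ncard < k → G.ConnectedOn W fun e => e ∉ S

/-- Some cycle lies entirely inside the vertex set `X`. -/
def HasCycleIn (G : Multigraph V E) (X : Set V) : Prop :=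
  ∃ C : Set E, G.IsCycle C ∧ ∀ e ∈ C, G.src e ∈ X ∧ G.tgt e ∈ X

/-- The edge cut `E(X, V \ X)`. -/
def cutEdges (G : Multigraph V E) (X : Set V) : Set E :=
  {e | (G.src e ∈ X ∧ G.tgt e ∉ X) ∨ (G.src e ∉ X ∧ G.tgt e ∈ X)}

/-- A cubic graph is cyclically `k`-edge-connected if every edge cut separating two
cycle-containing parts has at least `k` edges. -/
def CyclicallyEdgeConnected (G : Multigraph V E) (k : ℕ) : Prop :=
  ∀ X : Set V, G.HasCycleIn X → G.HasCycleIn Xᶜ → k ≤ (G.cutEdges X).ncard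

/-- `G` is 3-connected: more than 3 vertices, connected, and still connected after
deleting any two vertices. -/
def ThreeConnected [Fintype V] (G : Multigraph V E) : Prop :=
  3 < Fintype.card V ∧ G.Connected ∧
    ∀ u v : V, G.ConnectedOn {w : V | w ≠ u ∧ w ≠ v} fun _ => True

/-- The graph `G − r` obtained by deleting the vertex `r` and all incident edges. -/
def deleteVertex (G : Multigraph V E) (r : V) :
    Multigraph {v : V // v ≠ r} {e : E // G.src e ≠ r ∧ G.tgt e ≠ r} where
  src e := ⟨G.src e.1, e.2.1⟩
  tgt e := ⟨G.tgt e.1, e.2.2⟩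

end Multigraph

namespace Multigraph

variable {V E : Type} {G : Multigraph V E}

/-- The edge `e` joins `u` and `v`, in either direction. -/
def Ends (G : Multigraph V E) (e : E) (u v : V) : Prop :=
  (G.src e = u ∧ G.tgt e = v) ∨ (G.src e = v ∧ G.tgt e = u)

/-- The edges with both endpoints in `A`. -/
def inner (G : Multigraph V E) (A : Set V) : Set E :=
  {e | G.src e ∈ A ∧ G.tgt e ∈ A}

/-- The edges with one endpoint in `A` and one in `B`. -/
def between (G : Multigraph V E) (A B : Set V) : Set E :=
  {e | ∃ a ∈ A, ∃ b ∈ B, G.Ends e a b}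

/-- The edges incident with `v`. -/
def incident (G : Multigraph V E) (v : V) : Set E :=
  {e | G.src e = v ∨ G.tgt e = v}

/-- The subgraph induced on `A` is connected or empty. -/
def IsConn (G : Multigraph V E) (A : Set V) : Prop :=
  ∀ u ∈ A, ∀ v ∈ A, G.Reaches (· ∈ G.inner A) u v

/-- The vertex set of the component of the subgraph induced on `A` that contains `u`. -/
def comp (G : Multigraph V E) (A : Set V) (u : V) : Set V :=
  {w | w ∈ A ∧ G.Reaches (· ∈ G.inner A) u w}

lemma Ends.symm {e : E} {u v : V} (h : G.Ends e u v) : G.Ends e v u :=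
  Or.symm h

lemma ends_self (e : E) : G.Ends e (G.src e) (G.tgt e) :=
  Or.inl ⟨rfl, rfl⟩

lemma Ends.mem_inner {A : Set V} {e : E} {u v : V} (h : G.Ends e u v) (hu : u ∈ A)
    (hv : v ∈ A) : e ∈ G.inner A := by
  rcases h with ⟨rfl, rfl⟩ | ⟨rfl, rfl⟩
  exacts [⟨hu, hv⟩, ⟨hv, hu⟩]

lemma Ends.mem_of_mem_inner {A : Set V} {e : E} {u v : V} (h : G.Ends e u v)
    (he : e ∈ G.inner A) : u ∈ A ∧ v ∈ A := by
  rcases h with ⟨rfl, rfl⟩ | ⟨rfl, rfl⟩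
  exacts [he, he.symm]

lemma Ends.mem_incident {e : E} {u v : V} (h : G.Ends e u v) : e ∈ G.incident u := by
  rcases h with ⟨rfl, _⟩ | ⟨_, rfl⟩
  exacts [Or.inl rfl, Or.inr rfl]

lemma Ends.eq_or_eq {e : E} {u v a b : V} (h : G.Ends e u v) (h' : G.Ends e a b) :
    (u = a ∧ v = b) ∨ (u = b ∧ v = a) := by
  rcases h with ⟨rfl, rfl⟩ | ⟨rfl, rfl⟩ <;> rcases h' with ⟨rfl, rfl⟩ | ⟨rfl, rfl⟩ <;> simp

lemma inner_mono {A B : Set V} (h : A ⊆ B) : G.inner A ⊆ G.inner B :=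
  fun _ he => ⟨h he.1, h he.2⟩

lemma between_mono_left {A A' B : Set V} (h : A ⊆ A') : G.between A B ⊆ G.between A' B :=
  fun _ ⟨a, ha, b, hb, he⟩ => ⟨a, h ha, b, hb, he⟩

instance {P : E → Prop} : Std.Symm (G.adjVia P) :=
  ⟨fun _ _ ⟨e, he, h⟩ => ⟨e, he, Or.symm h⟩⟩

lemma Reaches.symm {P : E → Prop} {u v : V} (h : G.Reaches P u v) : G.Reaches P v u :=
  Relation.ReflTransGen.stdSymm.symm _ _ h

lemma Reaches.trans {P : E → Prop} {u v w : V} (h : G.Reaches P u v) (h' : G.Reaches P v w) :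
    G.Reaches P u w :=
  Relation.ReflTransGen.trans h h'

lemma Reaches.mono {P Q : E → Prop} (hPQ : ∀ e, P e → Q e) {u v : V} (h : G.Reaches P u v) :
    G.Reaches Q u v :=
  Relation.ReflTransGen.mono (fun _ _ ⟨e, he, hh⟩ => ⟨e, hPQ e he, hh⟩) _ _ h

lemma Ends.reaches {P : E → Prop} {e : E} {u v : V} (h : G.Ends e u v) (he : P e) :
    G.Reaches P u v :=
  Relation.ReflTransGen.single ⟨e, he, h⟩

lemma isConn_empty : G.IsConn ∅ := fun _ hu => hu.elim

lemma isConn_singleton (v : V) : G.IsConn {v} := by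
  rintro _ rfl _ rfl
  exact Relation.ReflTransGen.refl

lemma isConn_of_reaches {A : Set V} {v : V}
    (h : ∀ u ∈ A, G.Reaches (· ∈ G.inner A) u v) : G.IsConn A :=
  fun a ha b hb => (h a ha).trans (h b hb).symm

lemma IsConn.union {A B : Set V} (hA : G.IsConn A) (hB : G.IsConn B) {a b : V} {e : E}
    (ha : a ∈ A) (hb : b ∈ B) (he : G.Ends e a b) : G.IsConn (A ∪ B) := by
  apply isConn_of_reaches (v := a)
  rintro u (hu | hu)
  · exact (hA u hu a ha).mono (inner_mono Set.subset_union_left)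
  · exact ((hB u hu b hb).mono (inner_mono Set.subset_union_right)).trans
      (he.symm.reaches (he.mem_inner (Or.inl ha) (Or.inr hb)))

lemma comp_subset {A : Set V} {u : V} : G.comp A u ⊆ A := fun _ h => h.1

lemma mem_comp_self {A : Set V} {u : V} (hu : u ∈ A) : u ∈ G.comp A u :=
  ⟨hu, Relation.ReflTransGen.refl⟩

lemma mem_comp_of_ends {A : Set V} {u v w : V} {e : E} (hv : v ∈ G.comp A u) (hw : w ∈ A)
    (he : G.Ends e v w) : w ∈ G.comp A u :=
  ⟨hw, hv.2.trans (he.reaches (he.mem_inner hv.1 hw))⟩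

lemma subset_comp {A B : Set V} {u v : V} (hB : G.IsConn B) (hBA : B ⊆ A) (hv : v ∈ B)
    (hvc : v ∈ G.comp A u) : B ⊆ G.comp A u :=
  fun w hw => ⟨hBA hw, hvc.2.trans ((hB v hv w hw).mono (inner_mono hBA))⟩

lemma isConn_comp {A : Set V} {u : V} : G.IsConn (G.comp A u) := by
  refine isConn_of_reaches (v := u) fun w hw => Reaches.symm ?_
  obtain ⟨-, h⟩ := hw
  induction h with
  | refl => exact Relation.ReflTransGen.refl
  | @tail b c hb hbc ih =>
    obtain ⟨e, he, hends⟩ := hbc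
    have hbA := (Ends.mem_of_mem_inner hends he).1
    have hcA := (Ends.mem_of_mem_inner hends he).2
    have hb' : b ∈ G.comp A u := ⟨hbA, hb⟩
    exact ih.trans (Ends.reaches hends
      (Ends.mem_inner hends hb' (mem_comp_of_ends hb' hcA hends)))

lemma isConn_diff_comp {A : Set V} (hA : G.IsConn A) {u v : V} (hv : v ∈ A) :
    G.IsConn (A \ G.comp (A \ {v}) u) := by
  have hvc : v ∉ G.comp (A \ {v}) u := fun h => h.1.2 rfl
  refine isConn_of_reaches (v := v) fun w hw => ?_
  have h := hA w hw.1 v hv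
  induction h using Relation.ReflTransGen.head_induction_on with
  | refl => exact Relation.ReflTransGen.refl
  | @head a c hac _ ih =>
    obtain ⟨e, he, hends⟩ := hac
    have hcA := (Ends.mem_of_mem_inner hends he).2
    by_cases hav : a = v
    · subst hav
      exact Relation.ReflTransGen.refl
    · by_cases hc : c ∈ G.comp (A \ {v}) u
      · exact absurd (mem_comp_of_ends hc ⟨hw.1, hav⟩ (Ends.symm hends)) hw.2
      · exact (Ends.reaches hends (Ends.mem_inner hends hw ⟨hcA, hc⟩)).trans (ih ⟨hcA, hc⟩)

lemma IsConn.exists_ends {A B : Set V} (hA : G.IsConn A) {a b : V} (ha : a ∈ A) (hb : b ∈ A)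
    (haB : a ∈ B) (hbB : b ∉ B) : ∃ c ∈ A ∩ B, ∃ d ∈ A \ B, ∃ e, G.Ends e c d := by
  have h := hA a ha b hb
  induction h using Relation.ReflTransGen.head_induction_on with
  | refl => exact absurd haB hbB
  | @head a c hac _ ih =>
    obtain ⟨e, he, hends⟩ := hac
    have hcA := (Ends.mem_of_mem_inner hends he).2
    by_cases hc : c ∈ B
    · exact ih hcA hc
    · exact ⟨a, ⟨ha, haB⟩, c, ⟨hcA, hc⟩, e, hends⟩

lemma IsConn.exists_isConn_diff_singleton [Fintype V] {A : Set V} (hA : G.IsConn A)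
    (hne : A.Nonempty) : ∃ v ∈ A, G.IsConn (A \ {v}) := by
  obtain ⟨B, ⟨hBA, hB⟩, hmax⟩ := (Set.toFinite {B : Set V | B ⊂ A ∧ G.IsConn B}).exists_maximal
    ⟨∅, Set.empty_ssubset.2 hne, isConn_empty⟩
  obtain ⟨v, hvA, hvB, hconn⟩ : ∃ v ∈ A, v ∉ B ∧ G.IsConn (B ∪ {v}) := by
    rcases B.eq_empty_or_nonempty with rfl | ⟨b, hb⟩
    · obtain ⟨v, hv⟩ := hne
      exact ⟨v, hv, id, by simpa using isConn_singleton v⟩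
    · obtain ⟨w, hwA, hwB⟩ := Set.exists_of_ssubset hBA
      obtain ⟨c, hc, d, hd, e, he⟩ := hA.exists_ends (hBA.1 hb) hwA hb hwB
      exact ⟨d, hd.1, hd.2, hB.union (isConn_singleton d) hc.2 rfl he⟩
  have hsub : B ∪ {v} ⊆ A := Set.union_subset hBA.1 (Set.singleton_subset_iff.2 hvA)
  have heq : B ∪ {v} = A := by
    by_contra hne'
    exact hvB (hmax ⟨hsub.ssubset_of_ne hne', hconn⟩ Set.subset_union_left (Or.inr rfl))
  refine ⟨v, hvA, ?_⟩
  have : A \ {v} = B := by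
    rw [← heq]
    ext w
    simp only [Set.mem_sdiff, Set.mem_union, Set.mem_singleton_iff]
    constructor
    · rintro ⟨h | h, h'⟩
      exacts [h, absurd h h']
    · exact fun h => ⟨Or.inl h, fun h' => hvB (h' ▸ h)⟩
  rwa [this]

lemma Cubic.ncard_incident_le [Fintype E] (hc : G.Cubic) (v : V) : (G.incident v).ncard ≤ 3 :=
  (Set.ncard_union_le {e | G.src e = v} {e | G.tgt e = v}).trans_eq (hc v)

lemma EdgeConnected.le_ncard_between (hG : G.EdgeConnected 3) {U : Set V} (hU : U.Nonempty)
    (hU' : Uᶜ.Nonempty) : 3 ≤ (G.between U Uᶜ).ncard := by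
  by_contra! hlt
  obtain ⟨u, hu⟩ := hU
  obtain ⟨w, hw⟩ := hU'
  have h := (hG _ hlt).2 u w
  have key : w ∈ U := by
    induction h with
    | refl => exact hu
    | tail _ hbc ih =>
      obtain ⟨e, he, hends⟩ := hbc
      by_contra hc
      exact he ⟨_, not_not.1 fun hb => hb (ih hb), _, hc, hends⟩
  exact hw key

lemma eq_of_ends_of_ends {A B : Set V} (hAB : Disjoint A B) {e : E} {a a' b b' : V}
    (ha : a ∈ A) (hb' : b' ∈ B) (h : G.Ends e a b)
    (h' : G.Ends e a' b') : a = a' ∧ b = b' := by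
  rcases h.eq_or_eq h' with h | ⟨rfl, -⟩
  · exact h
  · exact absurd hb' (Set.disjoint_left.1 hAB ha)

/-- If `D` is a minimal connected subset of `Xᶜ` with connected complement in `Xᶜ` and with at
least two edges to `X`, then deleting from `D` a vertex `v` that can be moved to the complement
leaves no connected set with two edges to `X`. -/
lemma ncard_between_le_one_of_minimal [Fintype E] {X D : Set V}
    (hDX : D ⊆ Xᶜ) (hD : G.IsConn D) (hM : G.IsConn (Xᶜ \ D))
    (hmin : ∀ D' ⊂ D, G.IsConn D' → G.IsConn (Xᶜ \ D') → (G.between D' X).ncard ≤ 1)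
    {v : V} (hv : v ∈ D) (hvM : Xᶜ \ D = ∅ ∨ ∃ m ∈ Xᶜ \ D, ∃ e, G.Ends e v m)
    {F : Set V} (hF : G.IsConn F) (hFD : F ⊆ D \ {v}) : (G.between F X).ncard ≤ 1 := by
  rcases F.eq_empty_or_nonempty with rfl | ⟨u, hu⟩
  · have : G.between ∅ X = ∅ := by
      ext e
      simp [between]
    simp [this]
  have hsub : F ⊆ G.comp (D \ {v}) u := subset_comp hF hFD hu (mem_comp_self (hFD hu))
  refine (Set.ncard_le_ncard (between_mono_left hsub)).trans ?_
  have hvF : v ∉ G.comp (D \ {v}) u := fun h => h.1.2 rfl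
  have hcD : G.comp (D \ {v}) u ⊆ D := fun w hw => hw.1.1
  refine hmin _ ((Set.ssubset_iff_of_subset hcD).2 ⟨v, hv, hvF⟩) isConn_comp ?_
  have hrest := isConn_diff_comp hD (u := u) hv
  have heq : Xᶜ \ G.comp (D \ {v}) u = (D \ G.comp (D \ {v}) u) ∪ (Xᶜ \ D) := by
    ext w
    by_cases hw : w ∈ D
    · simp [hw, show w ∉ X from hDX hw]
    · simp [hw, show w ∉ G.comp (D \ {v}) u from fun h => hw (hcD h)]
  rw [heq]
  rcases hvM with h | ⟨m, hm, e, he⟩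
  · rwa [h, Set.union_empty]
  · exact hrest.union hM ⟨hv, hvF⟩ hm he

/-- If deleting any vertex of `N ⊆ D` from `D` leaves no connected set with two edges to `X`, and
each vertex of `N` has an edge leaving `D ∪ X`, then `N` is all of `D`, provided that the vertices
of `D` outside `N` have no such edge. -/
lemma eq_of_ncard_between_le_one [Fintype V] [Fintype E] (hG : G.EdgeConnected 3)
    (hcubic : G.Cubic) {X D N : Set V} (hDX : Disjoint D X) (hD : G.IsConn D)
    (hND : N ⊆ D) (hNne : N.Nonempty) (hDge : 2 ≤ (G.between D X).ncard)
    (hN : ∀ v ∈ D, v ∈ N ↔ ∃ m ∉ D ∪ X, ∃ e, G.Ends e v m)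
    (hle : ∀ v ∈ N, ∀ F ⊆ D \ {v}, G.IsConn F → (G.between F X).ncard ≤ 1) : N = D := by
  by_contra hne
  obtain ⟨p, hpD, hpN⟩ := Set.exists_of_ssubset (hND.ssubset_of_ne hne)
  set Q := G.comp (D \ N) p with hQ
  have hpQ : p ∈ Q := mem_comp_self ⟨hpD, hpN⟩
  have hQc : G.IsConn Q := isConn_comp
  have hQD : Q ⊆ D := fun w hw => hw.1.1
  have hQN : ∀ w ∈ Q, w ∉ N := fun w hw => hw.1.2
  have hQv : ∀ v ∈ N, Q ⊆ D \ {v} := fun v hv w hw =>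
    ⟨hQD hw, fun h => hQN w hw (by rw [h]; exact hv)⟩
  -- every edge leaving `Q` goes to `X` or to `N`
  have hcut : ∀ e ∈ G.between Q Qᶜ, e ∈ G.between Q X ∨ ∃ v ∈ N, ∃ w ∈ Q, G.Ends e w v := by
    rintro e ⟨w, hw, o, ho, he⟩
    by_cases hoX : o ∈ X
    · exact Or.inl ⟨w, hw, o, hoX, he⟩
    by_cases hoD : o ∈ D
    · refine Or.inr ⟨o, ?_, w, hw, he⟩
      by_contra hoN
      exact ho (mem_comp_of_ends hw ⟨hoD, hoN⟩ he)
    · exact absurd ((hN w (hQD hw)).2 ⟨o, by simp [hoX, hoD], e, he⟩) (hQN w hw)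
  let F : V → Set V := fun v => G.comp (D \ {v}) p
  have hFc : ∀ v, G.IsConn (F v) := fun v => isConn_comp
  have hFD : ∀ v, F v ⊆ D \ {v} := fun v => comp_subset
  have hQF : ∀ v ∈ N, Q ⊆ F v := fun v hv =>
    subset_comp hQc (hQv v hv) hpQ (mem_comp_self (hQv v hv hpQ))
  have hBc : ∀ v ∈ N, G.IsConn (D \ F v) := fun v hv => isConn_diff_comp hD (hND hv)
  have hvB : ∀ v ∈ N, v ∈ D \ F v := fun v hv => ⟨hND hv, fun h => (hFD v h).2 rfl⟩
  -- the part of `D` split off from `Q` by `v` has an edge to `X`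
  have hBX : ∀ v ∈ N, ∃ g, g ∈ G.between (D \ F v) X := by
    intro v hv
    by_contra! h
    have hsub : G.between D X ⊆ G.between (F v) X := by
      rintro e ⟨d, hd, x, hx, he⟩
      by_cases hdF : d ∈ F v
      · exact ⟨d, hdF, x, hx, he⟩
      · exact absurd ⟨d, ⟨hd, hdF⟩, x, hx, he⟩ (h e)
    have := Set.ncard_le_ncard hsub
    have := hle v hv (F v) (hFD v) (hFc v)
    omega
  have hnotboth : ∀ v, ∀ g ∈ G.between (D \ F v) X, g ∉ G.between (F v) X := by
    rintro v g ⟨d, hd, x, hx, he⟩ ⟨d', hd', x', hx', he'⟩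
    obtain ⟨rfl, -⟩ := eq_of_ends_of_ends hDX hd.1 hx' he he'
    exact absurd hd' hd.2
  -- parts split off by different neighbours of `Q` are disjoint
  have hBF : ∀ v ∈ N, ∀ v' ∈ N, v ≠ v' → ∀ w ∈ Q, ∀ w' ∈ Q, ∀ e e', G.Ends e w v →
      G.Ends e' w' v' → G.between (D \ F v) X ⊆ G.between (F v') X := by
    intro v hv v' hv' hvv' w hw w' hw' e e' he he'
    have h1 : v ∈ F v' := mem_comp_of_ends (hQF v' hv' hw) ⟨hND hv, hvv'⟩ he
    have h2 : v' ∈ F v := mem_comp_of_ends (hQF v hv hw') ⟨hND hv', hvv'.symm⟩ he'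
    refine between_mono_left (subset_comp (hBc v hv) ?_ (hvB v hv) h1)
    exact fun z hz => ⟨hz.1, fun h => hz.2 (by rw [Set.mem_singleton_iff.1 h]; exact h2)⟩
  -- a vertex of `N` has at most one edge to `Q`
  have hsingle : ∀ v ∈ N, ∀ w ∈ Q, ∀ w' ∈ Q, ∀ e e', G.Ends e w v → G.Ends e' w' v → e = e' := by
    intro v hv w hw w' hw' e e' he he'
    by_contra hee
    obtain ⟨m, hm, em, hem⟩ := (hN v (hND hv)).1 hv
    have hmD : m ∉ D := fun h => hm (Or.inl h)
    have hmX : m ∉ X := fun h => hm (Or.inr h)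
    have hvX : v ∉ X := Set.disjoint_left.1 hDX (hND hv)
    obtain ⟨o, g, hgo, hoQ, hom⟩ : ∃ o g, G.Ends g v o ∧ o ∉ Q ∧ o ≠ m := by
      obtain ⟨g, d, hd, x, hx, hg⟩ := hBX v hv
      by_cases hdv : d = v
      · subst hdv
        exact ⟨x, g, hg, fun h => Set.disjoint_left.1 hDX (hQD h) hx, fun h => hmX (h ▸ hx)⟩
      · obtain ⟨c, hc, o, ho, g, hg⟩ := (hBc v hv).exists_ends (B := {v}) (hvB v hv) hd rfl hdv
        rw [Set.mem_singleton_iff.1 hc.2] at hg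
        exact ⟨o, g, hg, fun h => ho.1.2 (hQF v hv h), fun h => hmD (h ▸ ho.1.1)⟩
    have hdiff : ∀ {e₁ e₂ : E} {o₁ o₂ : V}, G.Ends e₁ v o₁ → G.Ends e₂ v o₂ → o₁ ≠ o₂ →
        e₁ ≠ e₂ := by
      rintro e₁ _ o₁ o₂ h₁ h₂ h rfl
      rcases h₁.eq_or_eq h₂ with ⟨-, h'⟩ | ⟨h', h''⟩
      exacts [h h', h (h''.trans h')]
    have hwm : w ≠ m := fun h => hmD (h ▸ hQD hw)
    have hwm' : w' ≠ m := fun h => hmD (h ▸ hQD hw')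
    have hwo : w ≠ o := fun h => hoQ (h ▸ hw)
    have hwo' : w' ≠ o := fun h => hoQ (h ▸ hw')
    have hsub : (({e, e', em, g} : Finset E) : Set E) ⊆ G.incident v := by
      intro z hz
      simp only [Finset.coe_insert, Finset.coe_singleton, Set.mem_insert_iff,
        Set.mem_singleton_iff] at hz
      rcases hz with rfl | rfl | rfl | rfl
      exacts [he.symm.mem_incident, he'.symm.mem_incident, hem.mem_incident, hgo.mem_incident]
    have hfour : ({e, e', em, g} : Finset E).card = 4 := by
      rw [Finset.card_insert_of_notMem, Finset.card_insert_of_notMem,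
        Finset.card_insert_of_notMem, Finset.card_singleton]
      · simpa using hdiff hem hgo hom.symm
      · simpa using ⟨hdiff he'.symm hem hwm', hdiff he'.symm hgo hwo'⟩
      · simpa using ⟨hee, hdiff he.symm hem hwm, hdiff he.symm hgo hwo⟩
    have hcard := Set.ncard_le_ncard hsub
    rw [Set.ncard_coe_finset, hfour] at hcard
    have := hcubic.ncard_incident_le v
    omega
  obtain ⟨n, hn⟩ := hNne
  have hQcut : 3 ≤ (G.between Q Qᶜ).ncard :=
    hG.le_ncard_between ⟨p, hpQ⟩ ⟨n, fun h => hQN n h hn⟩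
  have hQX : (G.between Q X).ncard ≤ 1 := hle n hn Q (hQv n hn) hQc
  obtain ⟨e₁, he₁, he₁X⟩ : ∃ e ∈ G.between Q Qᶜ, e ∉ G.between Q X := by
    by_contra! h
    have := Set.ncard_le_ncard (show G.between Q Qᶜ ⊆ G.between Q X from h)
    omega
  obtain ⟨v₁, hv₁, w₁, hw₁, hends₁⟩ := (hcut e₁ he₁).resolve_left he₁X
  obtain ⟨e₂, e₃, ⟨he₂, h₂₁⟩, ⟨he₃, h₃₁⟩, h₂₃⟩ : ∃ e₂ e₃, e₂ ∈ G.between Q Qᶜ \ {e₁} ∧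
      e₃ ∈ G.between Q Qᶜ \ {e₁} ∧ e₂ ≠ e₃ := by
    have : 1 < (G.between Q Qᶜ \ {e₁}).ncard := by
      have := Set.ncard_sdiff_singleton_add_one he₁
      omega
    obtain ⟨a, ha, b, hb, hab⟩ := (Set.one_lt_ncard (Set.toFinite _)).1 this
    exact ⟨a, b, ha, hb, hab⟩
  have hF₁ := hle v₁ hv₁ (F v₁) (hFD v₁) (hFc v₁)
  have hkey : ∀ g ∈ G.between (F v₁) X, ∀ g' ∈ G.between (F v₁) X, g = g' :=
    fun g hg g' hg' => (Set.ncard_le_one_iff (Set.toFinite _)).1 hF₁ hg hg'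
  have hneq : ∀ {v v' w w' : V} {e e' : E}, v ∈ N → w ∈ Q → w' ∈ Q → G.Ends e w v →
      G.Ends e' w' v' → e ≠ e' → v ≠ v' := by
    rintro v _ w w' e e' hv hw hw' h h' hee rfl
    exact hee (hsingle v hv w hw w' hw' e e' h h')
  rcases hcut e₂ he₂ with hX₂ | ⟨v₂, hv₂, w₂, hw₂, hends₂⟩ <;>
  rcases hcut e₃ he₃ with hX₃ | ⟨v₃, hv₃, w₃, hw₃, hends₃⟩
  · exact h₂₃ (hkey _ (between_mono_left (hQF v₁ hv₁) hX₂) _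
      (between_mono_left (hQF v₁ hv₁) hX₃))
  · obtain ⟨g, hg⟩ := hBX v₃ hv₃
    have := hkey _ (between_mono_left (hQF v₁ hv₁) hX₂) g (hBF v₃ hv₃ v₁ hv₁
      (hneq hv₃ hw₃ hw₁ hends₃ hends₁ h₃₁) w₃ hw₃ w₁ hw₁ _ _ hends₃ hends₁ hg)
    exact hnotboth v₃ g hg (this ▸ between_mono_left (hQF v₃ hv₃) hX₂)
  · obtain ⟨g, hg⟩ := hBX v₂ hv₂
    have := hkey _ (between_mono_left (hQF v₁ hv₁) hX₃) g (hBF v₂ hv₂ v₁ hv₁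
      (hneq hv₂ hw₂ hw₁ hends₂ hends₁ h₂₁) w₂ hw₂ w₁ hw₁ _ _ hends₂ hends₁ hg)
    exact hnotboth v₂ g hg (this ▸ between_mono_left (hQF v₂ hv₂) hX₃)
  · obtain ⟨g, hg⟩ := hBX v₂ hv₂
    obtain ⟨g', hg'⟩ := hBX v₃ hv₃
    have := hkey g (hBF v₂ hv₂ v₁ hv₁ (hneq hv₂ hw₂ hw₁ hends₂ hends₁ h₂₁) w₂ hw₂ w₁ hw₁ _ _
      hends₂ hends₁ hg) g' (hBF v₃ hv₃ v₁ hv₁ (hneq hv₃ hw₃ hw₁ hends₃ hends₁ h₃₁)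
      w₃ hw₃ w₁ hw₁ _ _ hends₃ hends₁ hg')
    subst this
    have hgF := hBF v₃ hv₃ v₂ hv₂ (hneq hv₃ hw₃ hw₂ hends₃ hends₂ h₂₃.symm)
      w₃ hw₃ w₂ hw₂ _ _ hends₃ hends₂ hg'
    exact hnotboth v₂ g hg hgF

/-- If every set obtained from the connected set `Xᶜ` by deleting a vertex has at most one edge to
`X` from each connected subset, then `Xᶜ` is a single vertex. -/
lemma subsingleton_compl_of_ncard_between_le_one [Fintype V] [Fintype E]
    (hG : G.EdgeConnected 3) (hcubic : G.Cubic) {X : Set V} (hX : X.Nonempty)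
    (hW : G.IsConn Xᶜ)
    (hle : ∀ v ∈ Xᶜ, ∀ F ⊆ Xᶜ \ {v}, G.IsConn F → (G.between F X).ncard ≤ 1) :
    Xᶜ.Subsingleton := by
  rcases Xᶜ.eq_empty_or_nonempty with h | hne
  · rw [h]
    exact Set.subsingleton_empty
  obtain ⟨v, hv, hF⟩ := hW.exists_isConn_diff_singleton hne
  by_contra hns
  have hFne : (Xᶜ \ {v}).Nonempty := by
    by_contra h
    rw [Set.not_nonempty_iff_eq_empty, Set.sdiff_eq_empty] at h
    exact hns (Set.subsingleton_singleton.anti h)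
  obtain ⟨x, hx⟩ := hX
  have hFcut := hG.le_ncard_between hFne ⟨x, fun h => h.1 hx⟩
  have hWcut := hG.le_ncard_between hne ⟨x, fun h => h hx⟩
  have hle1 := hle v hv _ subset_rfl hF
  have hsub1 : G.between (Xᶜ \ {v}) (Xᶜ \ {v})ᶜ ⊆
      G.between (Xᶜ \ {v}) X ∪ G.between {v} (Xᶜ \ {v}) := by
    rintro e ⟨a, ha, b, hb, he⟩
    by_cases hbX : b ∈ X
    · exact Or.inl ⟨a, ha, b, hbX, he⟩
    · have : b = v := by
        by_contra h
        exact hb ⟨hbX, h⟩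
      exact Or.inr ⟨b, this, a, ha, he.symm⟩
  have hsub2 : G.between Xᶜ Xᶜᶜ ⊆ G.between (Xᶜ \ {v}) X ∪ G.between {v} X := by
    rintro e ⟨a, ha, b, hb, he⟩
    rw [compl_compl] at hb
    by_cases hav : a = v
    · exact Or.inr ⟨a, hav, b, hb, he⟩
    · exact Or.inl ⟨a, ⟨ha, hav⟩, b, hb, he⟩
  have hdisj : Disjoint (G.between {v} (Xᶜ \ {v})) (G.between {v} X) := by
    rw [Set.disjoint_left]
    rintro e ⟨a, rfl, b, hb, he⟩ ⟨a', rfl, b', hb', he'⟩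
    rcases he.eq_or_eq he' with ⟨-, rfl⟩ | ⟨-, rfl⟩
    exacts [hb.1 hb', hb.2 rfl]
  have hsub3 : G.between {v} (Xᶜ \ {v}) ∪ G.between {v} X ⊆ G.incident v := by
    rintro e (⟨a, rfl, b, hb, he⟩ | ⟨a, rfl, b, hb, he⟩) <;> exact he.mem_incident
  have h1 := (Set.ncard_le_ncard hsub1).trans (Set.ncard_union_le _ _)
  have h2 := (Set.ncard_le_ncard hsub2).trans (Set.ncard_union_le _ _)
  have h3 := Set.ncard_le_ncard hsub3
  rw [Set.ncard_union_eq hdisj] at h3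
  have := hcubic.ncard_incident_le v
  omega

/-- A nonseparating connected set `D` in the connected set `Xᶜ` with at least two edges to `X`,
such that `D` is all of `Xᶜ` and a single vertex, or each of its vertices has a neighbour in the
rest of `Xᶜ`. -/
lemma exists_nonseparating [Fintype V] [Fintype E] (hG : G.EdgeConnected 3) (hcubic : G.Cubic)
    {X : Set V} (hX : X.Nonempty) (hWne : Xᶜ.Nonempty) (hW : G.IsConn Xᶜ) :
    ∃ D ⊆ Xᶜ, G.IsConn D ∧ D.Nonempty ∧ 2 ≤ (G.between D X).ncard ∧ G.IsConn (Xᶜ \ D) ∧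
      ((D = Xᶜ ∧ D.Subsingleton) ∨
        (Xᶜ \ D).Nonempty ∧ ∀ d ∈ D, ∃ m ∈ Xᶜ \ D, ∃ e, G.Ends e d m) := by
  obtain ⟨D, ⟨hDX, hD, hDge, hM⟩, hmin⟩ := (Set.toFinite {D : Set V | D ⊆ Xᶜ ∧ G.IsConn D ∧
    2 ≤ (G.between D X).ncard ∧ G.IsConn (Xᶜ \ D)}).exists_minimal
    ⟨Xᶜ, subset_rfl, hW, by
      have := hG.le_ncard_between hWne (by rwa [compl_compl])
      rw [compl_compl] at this
      omega, by simpa using isConn_empty⟩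
  have hmin' : ∀ D' ⊂ D, G.IsConn D' → G.IsConn (Xᶜ \ D') → (G.between D' X).ncard ≤ 1 := by
    intro D' hD' h1 h2
    by_contra! h3
    exact hD'.2 (hmin ⟨hD'.1.trans hDX, h1, h3, h2⟩ hD'.1)
  have hDne : D.Nonempty := by
    have : (G.between D X).Nonempty := by
      rw [← Set.ncard_pos]
      omega
    obtain ⟨e, d, hd, -⟩ := this
    exact ⟨d, hd⟩
  refine ⟨D, hDX, hD, hDne, hDge, hM, ?_⟩
  rcases (Xᶜ \ D).eq_empty_or_nonempty with hMe | hMne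
  · obtain rfl : D = Xᶜ := hDX.antisymm (Set.sdiff_eq_empty.1 hMe)
    exact Or.inl ⟨rfl, subsingleton_compl_of_ncard_between_le_one hG hcubic hX hW
      fun v hv F hFD hF => ncard_between_le_one_of_minimal hDX hD hM hmin' hv (Or.inl hMe) hF hFD⟩
  · refine Or.inr ⟨hMne, ?_⟩
    have hmem : ∀ m, m ∉ D ∪ X ↔ m ∈ Xᶜ \ D := by
      intro m
      simp [and_comm]
    have hND : {v | v ∈ D ∧ ∃ m ∈ Xᶜ \ D, ∃ e, G.Ends e v m} = D := by
      refine eq_of_ncard_between_le_one hG hcubic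
        (Set.disjoint_left.2 fun d hd => hDX hd) hD (fun v hv => hv.1) ?_ hDge ?_ ?_
      · obtain ⟨d, hd⟩ := hDne
        obtain ⟨m, hm⟩ := hMne
        obtain ⟨c, hc, m', hm', e, he⟩ := hW.exists_ends (hDX hd) hm.1 hd hm.2
        exact ⟨c, hc.2, m', hm', e, he⟩
      · intro v hv
        simp only [hmem]
        exact ⟨fun h => h.2, fun h => ⟨hv, h⟩⟩
      · rintro v ⟨hv, hvm⟩ F hFD hF
        exact ncard_between_le_one_of_minimal hDX hD hM hmin' hv (Or.inr hvm) hF hFD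
    exact fun d hd => (hND.symm ▸ hd : d ∈ {v | v ∈ D ∧ ∃ m ∈ Xᶜ \ D, ∃ e, G.Ends e v m}).2

section Flow

variable [Fintype E] {R : Type} [CommRing R]

/-- The net outflow of an edge weighting at each vertex. -/
noncomputable def boundary (G : Multigraph V E) (R : Type) [CommRing R] :
    (E → R) →ₗ[R] (V → R) where
  toFun φ v := ∑ e, ((if G.src e = v then φ e else 0) - if G.tgt e = v then φ e else 0)
  map_add' φ ψ := by
    ext v
    simp only [Pi.add_apply, ← Finset.sum_add_distrib]
    refine Finset.sum_congr rfl fun e _ => ?_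
    split_ifs <;> ring
  map_smul' c φ := by
    ext v
    simp only [Pi.smul_apply, RingHom.id_apply, smul_eq_mul, Finset.mul_sum]
    refine Finset.sum_congr rfl fun e _ => ?_
    split_ifs <;> ring

lemma isFlow_iff_boundary {φ : E → R} : G.IsFlow φ ↔ G.boundary R φ = 0 := by
  rw [funext_iff]
  refine forall_congr' fun v => ?_
  simp [boundary, Finset.sum_sub_distrib, sub_eq_zero]

lemma IsFlow.add {φ ψ : E → R} (hφ : G.IsFlow φ) (hψ : G.IsFlow ψ) : G.IsFlow (φ + ψ) := by
  rw [isFlow_iff_boundary] at *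
  rw [map_add, hφ, hψ, add_zero]

lemma IsFlow.smul {φ : E → R} (hφ : G.IsFlow φ) (c : R) : G.IsFlow (c • φ) := by
  rw [isFlow_iff_boundary] at *
  rw [map_smul, hφ, smul_zero]

lemma isFlow_sum {ι : Type} {s : Finset ι} {φ : ι → E → R} (h : ∀ i ∈ s, G.IsFlow (φ i)) :
    G.IsFlow (∑ i ∈ s, φ i) := by
  simp only [isFlow_iff_boundary] at *
  rw [map_sum]
  exact Finset.sum_eq_zero h

lemma boundary_single (e : E) (c : R) : G.boundary R (Pi.single e c) =
    Pi.single (G.src e) c - Pi.single (G.tgt e) c := by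
  ext v
  simp only [boundary, LinearMap.coe_mk, AddHom.coe_mk, Pi.sub_apply]
  rw [Finset.sum_eq_single e]
  · simp [Pi.single_apply, eq_comm]
  · intro b _ hb
    simp [hb]
  · simp

lemma Ends.exists_boundary_single {e : E} {u v : V} (h : G.Ends e u v) : ∃ s : R,
    (s = 1 ∨ s = -1) ∧ G.boundary R (Pi.single e s) = Pi.single u 1 - Pi.single v 1 := by
  rcases h with ⟨rfl, rfl⟩ | ⟨rfl, rfl⟩
  · exact ⟨1, Or.inl rfl, boundary_single e 1⟩
  · refine ⟨-1, Or.inr rfl, ?_⟩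
    rw [boundary_single, Pi.single_neg, Pi.single_neg]
    ring

lemma Reaches.exists_boundary {P : E → Prop} {u v : V} (h : G.Reaches P u v) : ∃ p : E → R,
    (∀ e, ¬ P e → p e = 0) ∧ G.boundary R p = Pi.single u 1 - Pi.single v 1 := by
  induction h with
  | refl => exact ⟨0, fun _ _ => rfl, by simp⟩
  | tail _ hbc ih =>
    obtain ⟨p, hp, hpb⟩ := ih
    obtain ⟨e, he, hends⟩ := hbc
    obtain ⟨s, -, hs⟩ := Ends.exists_boundary_single (R := R) hends
    refine ⟨p + Pi.single e s, fun e' he' => ?_, ?_⟩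
    · have hne : e' ≠ e := fun h => he' (h ▸ he)
      simp [hp e' he', hne]
    · rw [map_add, hpb, hs]
      ring

/-- If the endpoints of each edge of `T` are joined by edges satisfying `P`, then any prescribed
values on `T` extend to a flow supported on `T` and the edges satisfying `P`. -/
lemma exists_isFlow_extending {P : E → Prop} {T : Set E}
    (hT : ∀ e ∈ T, ¬ P e ∧ G.Reaches P (G.src e) (G.tgt e)) (g : E → R) :
    ∃ φ : E → R, G.IsFlow φ ∧ (∀ e ∈ T, φ e = g e) ∧ ∀ e ∉ T, ¬ P e → φ e = 0 := by
  have hfund : ∀ e ∈ T, ∃ p : E → R, (∀ e', ¬ P e' → p e' = 0) ∧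
      G.boundary R p = Pi.single (G.src e) 1 - Pi.single (G.tgt e) 1 :=
    fun e he => (hT e he).2.exists_boundary
  choose! p hp hpb using hfund
  have hval : ∀ e', ¬ P e' → (∑ e ∈ T.toFinset, g e • (Pi.single e 1 - p e) : E → R) e' =
      if e' ∈ T then g e' else 0 := by
    intro e' he'
    rw [Finset.sum_apply]
    have : ∀ e ∈ T.toFinset, (g e • (Pi.single e 1 - p e) : E → R) e' =
        if e' = e then g e else 0 := by
      intro e he
      simp [hp e (Set.mem_toFinset.1 he) e' he', Pi.single_apply]
    rw [Finset.sum_congr rfl this, Finset.sum_ite_eq]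
    simp
  refine ⟨∑ e ∈ T.toFinset, g e • (Pi.single e 1 - p e), ?_, ?_, ?_⟩
  · refine isFlow_sum fun e he => IsFlow.smul ?_ _
    rw [isFlow_iff_boundary, map_sub, boundary_single, hpb e (Set.mem_toFinset.1 he), sub_self]
  · intro e he
    rw [hval e (hT e he).1, if_pos he]
  · intro e he he'
    rw [hval e he', if_neg he]

/-- Two edges between disjoint connected sets lie in a common cycle that uses no other edge between
these sets. -/
lemma exists_isFlow_through {X D : Set V} (hXD : Disjoint X D) (hX : G.IsConn X)
    (hD : G.IsConn D) {e e₀ : E} (he : e ∈ G.between D X) (he₀ : e₀ ∈ G.between D X)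
    (hne : e ≠ e₀) : ∃ χ : E → R, G.IsFlow χ ∧ χ e = 1 ∧ (χ e₀ = 1 ∨ χ e₀ = -1) ∧
      (∀ e' ∈ G.between D X, e' ≠ e → e' ≠ e₀ → χ e' = 0) ∧
      ∀ e' ∉ G.inner (X ∪ D), χ e' = 0 := by
  obtain ⟨d, hd, x, hx, hends⟩ := he
  obtain ⟨d₀, hd₀, x₀, hx₀, hends₀⟩ := he₀
  obtain ⟨s, hs, hsb⟩ := hends.exists_boundary_single (R := R)
  obtain ⟨t, ht, htb⟩ := hends₀.symm.exists_boundary_single (R := R)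
  obtain ⟨p, hp, hpb⟩ := (hX x hx x₀ hx₀).exists_boundary (R := R)
  obtain ⟨r, hr, hrb⟩ := (hD d₀ hd₀ d hd).exists_boundary (R := R)
  have hnotX : ∀ e' ∈ G.between D X, e' ∉ G.inner X := by
    rintro e' ⟨a, ha, b, hb, h⟩ h'
    exact Set.disjoint_left.1 hXD (h.mem_of_mem_inner h').1 ha
  have hnotD : ∀ e' ∈ G.between D X, e' ∉ G.inner D := by
    rintro e' ⟨a, ha, b, hb, h⟩ h'
    exact Set.disjoint_left.1 hXD hb (h.mem_of_mem_inner h').2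
  have hpK : ∀ e' ∈ G.between D X, p e' = 0 := fun e' h => hp e' (hnotX e' h)
  have hrK : ∀ e' ∈ G.between D X, r e' = 0 := fun e' h => hr e' (hnotD e' h)
  have he : e ∈ G.between D X := ⟨d, hd, x, hx, hends⟩
  have he₀ : e₀ ∈ G.between D X := ⟨d₀, hd₀, x₀, hx₀, hends₀⟩
  have hss : s * s = 1 := by rcases hs with rfl | rfl <;> ring
  refine ⟨s • (Pi.single e s + p + Pi.single e₀ t + r), ?_, ?_, ?_, ?_, ?_⟩
  · refine IsFlow.smul ?_ s
    rw [isFlow_iff_boundary, map_add, map_add, map_add, hsb, htb, hpb, hrb]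
    ring
  · simp [hpK e he, hrK e he, hne, hss]
  · simp only [Pi.smul_apply, Pi.add_apply, hpK e₀ he₀, hrK e₀ he₀, Pi.single_eq_same,
      Pi.single_eq_of_ne hne.symm, smul_eq_mul]
    rcases hs with rfl | rfl <;> rcases ht with rfl | rfl <;> simp
  · intro e' h' h1 h2
    simp [hpK e' h', hrK e' h', h1, h2]
  · intro e' h'
    have h1 : e' ≠ e := by
      rintro rfl
      exact h' (hends.mem_inner (Or.inr hd) (Or.inl hx))
    have h2 : e' ≠ e₀ := by
      rintro rfl
      exact h' (hends₀.mem_inner (Or.inr hd₀) (Or.inl hx₀))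
    simp [hp e' fun h => h' (inner_mono Set.subset_union_left h),
      hr e' fun h => h' (inner_mono Set.subset_union_right h), h1, h2]

lemma exists_isFlow_avoiding_between {X D : Set V} (hXD : Disjoint X D) (hX : G.IsConn X)
    (hD : G.IsConn D) (hge : 2 ≤ (G.between D X).ncard) (f : E → ZMod 3) :
    ∃ ψ : E → ZMod 3, G.IsFlow ψ ∧ (∀ e ∈ G.between D X, ψ e ≠ f e) ∧
      ∀ e ∉ G.inner (X ∪ D), ψ e = 0 := by
  obtain ⟨e₀, he₀, e₁, he₁, hne⟩ := (Set.one_lt_ncard (Set.toFinite _)).1 hge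
  have hthrough : ∀ e ∈ G.between D X \ {e₀}, ∃ χ : E → ZMod 3, G.IsFlow χ ∧ χ e = 1 ∧
      (χ e₀ = 1 ∨ χ e₀ = -1) ∧ (∀ e' ∈ G.between D X, e' ≠ e → e' ≠ e₀ → χ e' = 0) ∧
      ∀ e' ∉ G.inner (X ∪ D), χ e' = 0 :=
    fun e he => exists_isFlow_through hXD hX hD he.1 he₀ he.2
  choose! χ hflow hone hpm hzero hoff using hthrough
  set T := (G.between D X \ {e₀}) \ {e₁} with hT
  set ψ₀ : E → ZMod 3 := ∑ e ∈ T.toFinset, (f e + 1) • χ e with hψ₀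
  have hTK : ∀ e ∈ T.toFinset, e ∈ G.between D X \ {e₀} := fun e he => (Set.mem_toFinset.1 he).1
  have hψ₀val : ∀ e' ∈ G.between D X, e' ≠ e₀ → ψ₀ e' = if e' ∈ T then f e' + 1 else 0 := by
    intro e' he' hne'
    rw [hψ₀, Finset.sum_apply]
    have : ∀ e ∈ T.toFinset, ((f e + 1) • χ e) e' = if e = e' then f e + 1 else 0 := by
      intro e he
      split_ifs with h
      · subst h
        simp [hone e (hTK e he)]
      · simp [hzero e (hTK e he) e' he' (Ne.symm h) hne']
    rw [Finset.sum_congr rfl this, Finset.sum_ite_eq']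
    simp
  have he₁' : e₁ ∈ G.between D X \ {e₀} := ⟨he₁, Ne.symm hne⟩
  have hchoice : ∀ a b s ε : ZMod 3, (ε = 1 ∨ ε = -1) → ∃ c, c ≠ a ∧ s + c * ε ≠ b := by
    decide
  obtain ⟨c, hc₁, hc₀⟩ := hchoice (f e₁) (f e₀) (ψ₀ e₀) (χ e₁ e₀) (hpm e₁ he₁')
  refine ⟨ψ₀ + c • χ e₁, (isFlow_sum fun e he => (hflow e (hTK e he)).smul _).add
    ((hflow e₁ he₁').smul c), ?_, ?_⟩
  · intro e he
    by_cases h0 : e = e₀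
    · subst h0
      simpa using hc₀
    by_cases h1 : e = e₁
    · subst h1
      simpa [hψ₀val e he h0, hT, hone e he₁'] using hc₁
    · have heT : e ∈ T := ⟨⟨he, h0⟩, h1⟩
      simp [hψ₀val e he h0, heT, hzero e₁ he₁' e he h1 h0]
  · intro e he
    rw [hψ₀]
    simp only [Pi.add_apply, Finset.sum_apply, Pi.smul_apply, hoff e₁ he₁' e he, smul_zero,
      add_zero]
    exact Finset.sum_eq_zero fun e' he' => by rw [hoff e' (hTK e' he') e he, smul_zero]

/-- Any values on the edges inside `X` but outside `S` can be avoided by a `ℤ₃`-flow supported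
inside `X`. -/
def Avoidable (G : Multigraph V E) (X : Set V) (S : Set E) : Prop :=
  ∀ f : E → ZMod 3, ∃ φ : E → ZMod 3, G.IsFlow φ ∧ (∀ e ∉ G.inner X, φ e = 0) ∧
    ∀ e ∈ G.inner X \ S, φ e ≠ f e

lemma Avoidable.union {X D : Set V} {S : Set E} (h : G.Avoidable X S) (hXD : Disjoint X D)
    (hX : G.IsConn X) (hD : G.IsConn D) (hge : 2 ≤ (G.between D X).ncard) :
    G.Avoidable (X ∪ D) (S ∪ G.inner D) := by
  intro f
  obtain ⟨ψ, hψ, hψK, hψ0⟩ := exists_isFlow_avoiding_between hXD hX hD hge f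
  obtain ⟨φ, hφ, hφ0, hφf⟩ := h (f - ψ)
  refine ⟨φ + ψ, hφ.add hψ, fun e he => ?_, ?_⟩
  · simp [hψ0 e he, hφ0 e fun h' => he (inner_mono Set.subset_union_left h')]
  · rintro e ⟨he, heS⟩
    by_cases heX : e ∈ G.inner X
    · have := hφf e ⟨heX, fun h' => heS (Or.inl h')⟩
      simpa [eq_sub_iff_add_eq] using this
    · have heK : e ∈ G.between D X := by
        have heD : e ∉ G.inner D := fun h' => heS (Or.inr h')
        rcases he with ⟨hs | hs, ht | ht⟩
        · exact absurd ⟨hs, ht⟩ heX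
        · exact ⟨_, ht, _, hs, (ends_self e).symm⟩
        · exact ⟨_, hs, _, ht, ends_self e⟩
        · exact absurd ⟨hs, ht⟩ heD
      simpa [hφ0 e heX] using hψK e heK

/-- An avoidable set `S` inside `X` with nonseparating complement grows to one for the whole
vertex set. -/
lemma Avoidable.exists_superset [Fintype V] (hG : G.EdgeConnected 3) (hcubic : G.Cubic)
    {X : Set V} {S : Set E} (hX : G.IsConn X) (hXne : X.Nonempty) (hW : G.IsConn Xᶜ)
    (hWne : Xᶜ.Nonempty) (hSX : S ⊆ G.inner X) (hS : G.Avoidable X S)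
    (hreach : ∀ x ∈ X, ∃ w ∈ Xᶜ, G.Reaches (fun e => e ∉ S ∧ e ∉ G.inner Xᶜ) x w) :
    ∃ S' ⊇ S, G.ConnectedVia (· ∉ S') ∧ G.Avoidable Set.univ S' := by
  induction hn : Xᶜ.ncard using Nat.strong_induction_on generalizing X S with
  | _ n ih =>
  obtain ⟨D, hDX, hD, hDne, hge, hM, hcase⟩ := exists_nonseparating hG hcubic hXne hWne hW
  have hXD : Disjoint X D := Set.disjoint_right.2 fun d hd => hDX hd
  have hS' := hS.union hXD hX hD hge
  have hcompl : (X ∪ D)ᶜ = Xᶜ \ D := by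
    rw [Set.compl_union, Set.sdiff_eq]
  have hDinner : G.inner D ⊆ G.inner Xᶜ := inner_mono hDX
  rcases hcase with ⟨rfl, hsub⟩ | ⟨hMne, hDM⟩
  · refine ⟨S ∪ G.inner Xᶜ, Set.subset_union_left, ?_, by simpa using hS'⟩
    obtain ⟨y, hy⟩ := hWne
    have hto : ∀ u, G.Reaches (· ∉ S ∪ G.inner Xᶜ) u y := by
      intro u
      by_cases hu : u ∈ X
      · obtain ⟨w, hw, h⟩ := hreach u hu
        rw [hsub hw hy] at h
        exact h.mono fun e he h' => h'.elim he.1 he.2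
      · rw [hsub hu hy]
        exact Relation.ReflTransGen.refl
    exact ⟨⟨y⟩, fun u v => (hto u).trans (hto v).symm⟩
  · have hlt : ((X ∪ D)ᶜ).ncard < n := by
      rw [← hn, hcompl]
      obtain ⟨d, hd⟩ := hDne
      exact Set.ncard_lt_ncard ((Set.ssubset_iff_of_subset Set.sdiff_subset).2
        ⟨d, hDX hd, fun h => h.2 hd⟩)
    have hconn : G.IsConn (X ∪ D) := by
      have : (G.between D X).Nonempty := by
        rw [← Set.ncard_pos]
        omega
      obtain ⟨e, d, hd, x, hx, he⟩ := this
      exact hX.union hD hx hd he.symm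
    have hsub : S ∪ G.inner D ⊆ G.inner (X ∪ D) :=
      Set.union_subset (hSX.trans (inner_mono Set.subset_union_left))
        (inner_mono Set.subset_union_right)
    have hstep : ∀ d ∈ D, ∃ w ∈ (X ∪ D)ᶜ,
        G.Reaches (fun e => e ∉ S ∪ G.inner D ∧ e ∉ G.inner (X ∪ D)ᶜ) d w := by
      intro d hd
      obtain ⟨m, hm, e, he⟩ := hDM d hd
      refine ⟨m, by rwa [hcompl], he.reaches ⟨?_, ?_⟩⟩
      · rintro (h | h)
        · exact hm.1 (he.mem_of_mem_inner (hSX h)).2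
        · exact hm.2 (he.mem_of_mem_inner h).2
      · exact fun h => (he.mem_of_mem_inner h).1 (Or.inr hd)
    have hreach' : ∀ x ∈ X ∪ D, ∃ w ∈ (X ∪ D)ᶜ,
        G.Reaches (fun e => e ∉ S ∪ G.inner D ∧ e ∉ G.inner (X ∪ D)ᶜ) x w := by
      rintro x (hx | hx)
      · obtain ⟨w, hw, hxw⟩ := hreach x hx
        have hxw' : G.Reaches (fun e => e ∉ S ∪ G.inner D ∧ e ∉ G.inner (X ∪ D)ᶜ) x w :=
          hxw.mono fun e he => ⟨fun h => h.elim he.1 fun h => he.2 (hDinner h),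
            fun h => he.2 (inner_mono (Set.compl_subset_compl.2 Set.subset_union_left) h)⟩
        by_cases hwD : w ∈ D
        · obtain ⟨m, hm, hwm⟩ := hstep w hwD
          exact ⟨m, hm, hxw'.trans hwm⟩
        · exact ⟨w, by rw [hcompl]; exact ⟨hw, hwD⟩, hxw'⟩
      · exact hstep x hx
    obtain ⟨S', hS'S, h⟩ := ih _ hlt hconn (hXne.mono Set.subset_union_left)
      (by rwa [hcompl]) (by rwa [hcompl]) hsub hS' hreach' rfl
    exact ⟨S', Set.subset_union_left.trans hS'S, h⟩

end Flow

section Cycle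

variable {C : Set E}

lemma eq_of_ncard_add_ncard_eq_two [Finite E] {A B : Set E} (h : A.ncard + B.ncard = 2)
    {x y : E} (hx : x ∈ A ∪ B) (hy : y ∈ A ∪ B) (hxy : x ≠ y) :
    A ∪ B = {x, y} ∧ A ∩ B = ∅ := by
  have hsub : {x, y} ⊆ A ∪ B := by
    rintro z (rfl | rfl)
    exacts [hx, hy]
  have h2 := Set.ncard_pair hxy
  have hle := Set.ncard_le_ncard hsub
  have hui := Set.ncard_union_add_ncard_inter A B
  refine ⟨(Set.eq_of_subset_of_ncard_le hsub (by omega)).symm, ?_⟩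
  rw [← Set.ncard_eq_zero]
  omega

lemma Cubic.ncard_notMem_add_ncard_notMem [Finite E] (hcubic : G.Cubic) (hC : G.IsCycle C)
    {x : V} (hx : G.touches C x) :
    {e | e ∉ C ∧ G.src e = x}.ncard + {e | e ∉ C ∧ G.tgt e = x}.ncard = 1 := by
  have hsplit : ∀ A : Set E, {e ∈ C | e ∈ A}.ncard + {e | e ∉ C ∧ e ∈ A}.ncard = A.ncard := by
    intro A
    rw [← Set.ncard_inter_add_ncard_sdiff_eq_ncard A C]
    congr 2 <;> ext e <;> simp [and_comm]
  have h3 := hcubic x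
  have h2 := hC.2.1 x hx
  have hs := hsplit {e | G.src e = x}
  have ht := hsplit {e | G.tgt e = x}
  simp only [degree, Set.mem_ofPred_eq] at *
  omega

/-- A vertex of a cycle in a cubic graph has only one neighbour along edges not in the cycle. -/
lemma Cubic.eq_of_ends_of_notMem [Finite E] (hcubic : G.Cubic) (hC : G.IsCycle C)
    {x w w' : V} (hx : G.touches C x) {e e' : E} (he : e ∉ C) (he' : e' ∉ C)
    (h : G.Ends e x w) (h' : G.Ends e' x w') : w = w' := by
  have hone := hcubic.ncard_notMem_add_ncard_notMem hC hx
  set A := {e | e ∉ C ∧ G.src e = x}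
  set B := {e | e ∉ C ∧ G.tgt e = x}
  have hui := Set.ncard_union_add_ncard_inter A B
  have hpos : 0 < (A ∪ B).ncard := by
    rw [Set.ncard_pos]
    exact ⟨e, h.mem_incident.imp (⟨he, ·⟩) (⟨he, ·⟩)⟩
  have heq : e = e' := (Set.ncard_le_one_iff (Set.toFinite (A ∪ B))).1 (by omega)
    (h.mem_incident.imp (⟨he, ·⟩) (⟨he, ·⟩)) (h'.mem_incident.imp (⟨he', ·⟩) (⟨he', ·⟩))
  subst heq
  rcases h.eq_or_eq h' with ⟨-, h⟩ | ⟨h, h'⟩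
  exacts [h, h'.trans h]

lemma IsCycle.subset_inner : C ⊆ G.inner {v | G.touches C v} :=
  fun e he => ⟨⟨e, he, Or.inl rfl⟩, ⟨e, he, Or.inr rfl⟩⟩

lemma IsCycle.isConn (hC : G.IsCycle C) : G.IsConn {v | G.touches C v} :=
  fun u hu v hv => (hC.2.2 u v hu hv).mono subset_inner

lemma IsCycle.avoidable [Fintype E] (hC : G.IsCycle C) :
    G.Avoidable {v | G.touches C v} C := by
  intro f
  obtain ⟨φ, hφ, hφT, hφ0⟩ := exists_isFlow_extending (G := G) (P := (· ∈ C))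
    (T := G.inner {v | G.touches C v} \ C)
    (fun e he => ⟨he.2, hC.2.2 _ _ he.1.1 he.1.2⟩) (f + 1)
  refine ⟨φ, hφ, fun e he => hφ0 e (fun h => he h.1) fun h => he (subset_inner h),
    fun e he => ?_⟩
  rw [hφT e he]
  simp

lemma Cubic.isConn_compl_of_peripheral [Finite E] (hcubic : G.Cubic) (hC : G.IsCycle C)
    (hCper : G.Peripheral C) : G.IsConn {v | G.touches C v}ᶜ := by
  intro u hu v hv
  set W := {v | G.touches C v}ᶜ
  have hinv : ∀ w, G.Reaches (· ∉ C) u w → (w ∈ W → G.Reaches (· ∈ G.inner W) u w) ∧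
      (w ∉ W → ∀ e ∉ C, ∀ w', G.Ends e w w' → w' ∈ W ∧ G.Reaches (· ∈ G.inner W) u w') := by
    intro w hw
    induction hw with
    | refl => exact ⟨fun _ => Relation.ReflTransGen.refl, fun h => absurd hu h⟩
    | @tail b c _ hbc ih =>
      obtain ⟨e, he, hends⟩ := hbc
      by_cases hb : b ∈ W
      · refine ⟨fun hc => (ih.1 hb).trans (Ends.reaches hends (Ends.mem_inner hends hb hc)),
          fun hc e' he' w' h' => ?_⟩
        obtain rfl := hcubic.eq_of_ends_of_notMem hC (not_not.1 hc) he he' (Ends.symm hends) h'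
        exact ⟨hb, ih.1 hb⟩
      · have := ih.2 hb e he c hends
        exact ⟨fun _ => this.2, fun hc => absurd this.1 hc⟩
  exact (hinv v (hCper.2 u v)).1 hv

lemma Peripheral.exists_reaches (hCper : G.Peripheral C) {X : Set V} (hne : Xᶜ.Nonempty)
    {x : V} (hx : x ∈ X) :
    ∃ w ∈ Xᶜ, G.Reaches (fun e => e ∉ C ∧ e ∉ G.inner Xᶜ) x w := by
  obtain ⟨y, hy⟩ := hne
  have h := hCper.2 x y
  induction h using Relation.ReflTransGen.head_induction_on with
  | refl => exact absurd hx hy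
  | @head a c hac _ ih =>
    obtain ⟨e, he, hends⟩ := hac
    have hstep : G.Reaches (fun e => e ∉ C ∧ e ∉ G.inner Xᶜ) a c :=
      Ends.reaches hends ⟨he, fun h => (Ends.mem_of_mem_inner hends h).1 hx⟩
    by_cases hc : c ∈ X
    · obtain ⟨w, hw, h⟩ := ih hc
      exact ⟨w, hw, hstep.trans h⟩
    · exact ⟨c, hc, hstep⟩

lemma exists_peripheral_superset [Fintype V] [Fintype E] (hG : G.EdgeConnected 3)
    (hcubic : G.Cubic) (hC : G.IsCycle C) (hCper : G.Peripheral C) :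
    ∃ S ⊇ C, G.Peripheral S ∧ G.Avoidable Set.univ S := by
  rcases ({v | G.touches C v}ᶜ).eq_empty_or_nonempty with h | h
  · refine ⟨C, subset_rfl, hCper, ?_⟩
    rw [← Set.compl_empty_iff.1 h]
    exact hC.avoidable
  · obtain ⟨e, he⟩ := hC.1
    exact hC.avoidable.exists_superset hG hcubic hC.isConn ⟨_, e, he, Or.inl rfl⟩
      (hcubic.isConn_compl_of_peripheral hC hCper) h IsCycle.subset_inner
      fun x hx => hCper.exists_reaches h hx

lemma IsCycle.ncard_eq [Fintype V] [Fintype E] (hC : G.IsCycle C) :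
    {v | G.touches C v}.ncard = C.ncard := by
  have hfiber : ∀ g : E → V, (∀ e ∈ C, G.touches C (g e)) →
      C.ncard = ∑ v ∈ {v | G.touches C v}.toFinset, {e ∈ C | g e = v}.ncard := by
    intro g hg
    rw [Set.ncard_eq_toFinset_card', Finset.card_eq_sum_card_fiberwise (f := g)
      (t := {v | G.touches C v}.toFinset) (by intro e he; simpa using hg e (by simpa using he))]
    refine Finset.sum_congr rfl fun v _ => ?_
    rw [Set.ncard_eq_toFinset_card']
    congr 1
    ext e
    simp
  have hs := hfiber G.src fun e he => ⟨e, he, Or.inl rfl⟩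
  have ht := hfiber G.tgt fun e he => ⟨e, he, Or.inr rfl⟩
  have hsum : ∑ v ∈ {v | G.touches C v}.toFinset,
      ({e ∈ C | G.src e = v}.ncard + {e ∈ C | G.tgt e = v}.ncard) =
        {v | G.touches C v}.ncard * 2 := by
    rw [Finset.sum_congr rfl fun v hv => hC.2.1 v (by simpa using hv), Finset.sum_const,
      Set.ncard_eq_toFinset_card', smul_eq_mul]
  rw [Finset.sum_add_distrib, ← hs, ← ht] at hsum
  omega

variable [Fintype E] {R : Type} [CommRing R]

/-- A cycle carries a nonzero flow, since it has as many edges as vertices and boundaries sum to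
zero. -/
lemma IsCycle.exists_isFlow_ne_zero [Fintype V] [Finite R] [Nontrivial R] (hC : G.IsCycle C) :
    ∃ ψ : E → R, G.IsFlow ψ ∧ (∀ e ∉ C, ψ e = 0) ∧ ψ ≠ 0 := by
  let extend : (C → R) → E → R := fun g e => if h : e ∈ C then g ⟨e, h⟩ else 0
  let bd : (C → R) → ({v | G.touches C v} → R) := fun g v => G.boundary R (extend g) v
  have hoff : ∀ g, ∀ v, ¬ G.touches C v → G.boundary R (extend g) v = 0 := by
    intro g v hv
    refine Finset.sum_eq_zero fun e _ => ?_
    by_cases he : e ∈ C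
    · rw [if_neg fun h => hv ⟨e, he, Or.inl h⟩, if_neg fun h => hv ⟨e, he, Or.inr h⟩, sub_self]
    · simp [extend, he]
  have hzero : ∀ g, ∑ v, bd g v = 0 := by
    intro g
    have htot : ∑ v, G.boundary R (extend g) v = 0 := by
      simp only [boundary, LinearMap.coe_mk, AddHom.coe_mk]
      rw [Finset.sum_comm]
      simp [Finset.sum_sub_distrib]
    rw [← htot, ← Finset.sum_subset (Finset.subset_univ {v | G.touches C v}.toFinset)
      fun v _ hv => hoff g v (by simpa using hv)]
    exact (Finset.sum_subtype {v | G.touches C v}.toFinset (p := (· ∈ {v | G.touches C v}))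
      (fun _ => Set.mem_toFinset) (G.boundary R (extend g))).symm
  have hnsurj : ¬ Function.Surjective bd := by
    intro h
    obtain ⟨e, he⟩ := hC.1
    obtain ⟨g, hg⟩ := h (Pi.single ⟨G.src e, e, he, Or.inl rfl⟩ 1)
    have := hzero g
    rw [hg] at this
    simp at this
  have hninj : ¬ Function.Injective bd := by
    intro h
    refine hnsurj (h.bijective_of_nat_card_le ?_).2
    rw [Nat.card_fun, Nat.card_fun, Nat.card_coe_set_eq, Nat.card_coe_set_eq, hC.ncard_eq]
  obtain ⟨g, g', hgg', hne⟩ : ∃ g g', bd g = bd g' ∧ g ≠ g' := by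
    simpa [Function.Injective] using hninj
  refine ⟨extend g - extend g', ?_, ?_, ?_⟩
  · rw [isFlow_iff_boundary, map_sub, sub_eq_zero]
    ext v
    by_cases hv : G.touches C v
    · exact congrFun hgg' ⟨v, hv⟩
    · rw [hoff g v hv, hoff g' v hv]
  · intro e he
    simp [extend, he]
  · refine fun h => hne (funext fun e => ?_)
    have := congrFun h e
    simpa [extend, sub_eq_zero] using this

lemma IsCycle.eq_zero_of_incident (hC : G.IsCycle C) {ψ : E → R} (hψ : G.IsFlow ψ)
    (hψ0 : ∀ e ∉ C, ψ e = 0) {v : V} {e e' : E} (he : e ∈ C) (he' : e' ∈ C)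
    (hv : e ∈ G.incident v) (hv' : e' ∈ G.incident v) (h : ψ e' = 0) : ψ e = 0 := by
  by_cases hne : e = e'
  · rwa [hne]
  obtain ⟨hunion, hinter⟩ := eq_of_ncard_add_ncard_eq_two (hC.2.1 v ⟨e, he, hv⟩)
    (hv.imp (⟨he, ·⟩) (⟨he, ·⟩)) (hv'.imp (⟨he', ·⟩) (⟨he', ·⟩)) hne
  have hrest : ∀ e'' ≠ e, ψ e'' = 0 ∨ (G.src e'' ≠ v ∧ G.tgt e'' ≠ v) := by
    intro e'' h''
    by_cases heC : e'' ∈ C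
    · by_cases heq : e'' = e'
      · exact Or.inl (heq ▸ h)
      · refine Or.inr (not_or.1 fun hor => ?_)
        have : e'' ∈ ({e, e'} : Set E) := hunion ▸ hor.imp (⟨heC, ·⟩) (⟨heC, ·⟩)
        exact this.elim h'' heq
    · exact Or.inl (hψ0 e'' heC)
  have hb := hψ v
  rw [Finset.sum_eq_single e (fun b _ hb => by rcases hrest b hb with h | h <;> simp [h])
    (by simp), Finset.sum_eq_single e
    (fun b _ hb => by rcases hrest b hb with h | h <;> simp [h]) (by simp)] at hb
  have hloop : ¬ (G.src e = v ∧ G.tgt e = v) := fun hl =>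
    Set.eq_empty_iff_forall_notMem.1 hinter e ⟨⟨he, hl.1⟩, ⟨he, hl.2⟩⟩
  rcases hv with hv | hv
  · rwa [if_pos hv, if_neg fun h => hloop ⟨hv, h⟩] at hb
  · rw [if_pos hv, if_neg fun h => hloop ⟨h, hv⟩] at hb
    exact hb.symm

lemma IsCycle.exists_isFlow_support_eq [Fintype V] [Finite R] [Nontrivial R]
    (hC : G.IsCycle C) : ∃ ψ : E → R, G.IsFlow ψ ∧ ∀ e, ψ e ≠ 0 ↔ e ∈ C := by
  obtain ⟨ψ, hψ, hψ0, hne⟩ := hC.exists_isFlow_ne_zero (R := R)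
  refine ⟨ψ, hψ, fun e => ⟨fun h => not_not.1 fun he => h (hψ0 e he), fun he h => hne ?_⟩⟩
  have hspread : ∀ v, G.Reaches (· ∈ C) (G.src e) v →
      ∀ e' ∈ C, e' ∈ G.incident v → ψ e' = 0 := by
    intro v hv
    induction hv with
    | refl =>
      exact fun e' he' hv' => hC.eq_zero_of_incident hψ hψ0 he' he hv' (Or.inl rfl) h
    | @tail b c _ hbc ih =>
      obtain ⟨e₁, he₁, hends⟩ := hbc
      exact fun e' he' hv' => hC.eq_zero_of_incident hψ hψ0 he' he₁ hv'
        (Ends.mem_incident (Ends.symm hends)) (ih e₁ he₁ (Ends.mem_incident hends))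
  funext e'
  by_cases he' : e' ∈ C
  · exact hspread (G.src e') (hC.2.2 _ _ ⟨e, he, Or.inl rfl⟩ ⟨e', he', Or.inl rfl⟩) e' he'
      (Or.inl rfl)
  · exact hψ0 e' he'

end Cycle

/-- Among the three shifts of `φ` by multiples of `ψ`, one agrees with `f` on at most a third of
a set where `ψ` is nowhere zero. -/
lemma exists_card_filter_le {E : Type} (s : Finset E) (φ ψ f : E → ZMod 3)
    (hψ : ∀ e ∈ s, ψ e ≠ 0) : ∃ c : ZMod 3, 3 * {e ∈ s | φ e + c * ψ e = f e}.card ≤ s.card := by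
  have hone : ∀ a b t : ZMod 3, t ≠ 0 →
      (∑ c : ZMod 3, if a + c * t = b then 1 else 0) = 1 := by
    decide
  have hsum : ∑ c : ZMod 3, {e ∈ s | φ e + c * ψ e = f e}.card = s.card := by
    simp only [Finset.card_filter]
    rw [Finset.sum_comm, Finset.card_eq_sum_ones]
    refine Finset.sum_congr rfl fun e he => ?_
    convert hone (φ e) (f e) (ψ e) (hψ e he)
  obtain ⟨c, -, hc⟩ := Finset.exists_le_of_sum_le (s := Finset.univ)
    (f := fun c : ZMod 3 => 3 * {e ∈ s | φ e + c * ψ e = f e}.card) (g := fun _ => s.card)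
    Finset.univ_nonempty (by rw [← Finset.mul_sum, hsum]; simp [ZMod.card])
  exact ⟨c, hc⟩

lemma IsFlow.prodMk [Fintype E] {Γ Δ : Type} [AddCommGroup Γ] [AddCommGroup Δ] {φ : E → Γ}
    {ψ : E → Δ} (hφ : G.IsFlow φ) (hψ : G.IsFlow ψ) : G.IsFlow fun e => (φ e, ψ e) := by
  intro v
  ext
  · simpa [Prod.fst_sum, apply_ite Prod.fst] using hφ v
  · simpa [Prod.snd_sum, apply_ite Prod.snd] using hψ v

/-- If `S` is peripheral and `φ` avoids the second coordinate of `f` off `S`, then the first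
coordinate is free wherever `φ` avoids the second coordinate of `f` on `S`. -/
lemma Peripheral.two_pow_le_card [Fintype E] {S : Set E} (hS : G.Peripheral S)
    (f : E → ZMod 2 × ZMod 3) {φ : E → ZMod 3} (hφ : G.IsFlow φ)
    (hφS : ∀ e ∉ S, φ e ≠ (f e).2) {A : Finset E} (hAS : ∀ e ∈ A, e ∈ S)
    (hA : ∀ e ∈ A, φ e ≠ (f e).2) : 2 ^ A.card ≤
      Nat.card {φ : E → ZMod 2 × ZMod 3 // G.IsFlow φ ∧ ∀ e : E, φ e ≠ f e} := by
  have hext : ∀ g : A → ZMod 2, ∃ χ : E → ZMod 2, G.IsFlow χ ∧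
      ∀ e ∈ S, χ e = if h : e ∈ A then g ⟨e, h⟩ else (f e).1 + 1 := by
    intro g
    obtain ⟨χ, hχ, hχS, -⟩ := exists_isFlow_extending (G := G) (P := (· ∉ S)) (T := S)
      (fun e he => ⟨not_not.2 he, hS.2 _ _⟩)
      (fun e => if h : e ∈ A then g ⟨e, h⟩ else (f e).1 + 1)
    exact ⟨χ, hχ, hχS⟩
  choose χ hχ hχS using hext
  have hne : ∀ g e, (χ g e, φ e) ≠ f e := by
    intro g e h
    have h1 : χ g e = (f e).1 := congrArg Prod.fst h
    have h2 : φ e = (f e).2 := congrArg Prod.snd h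
    have heS : e ∈ S := not_not.1 fun he => hφS e he h2
    rw [hχS g e heS, dif_neg fun he => hA e he h2] at h1
    simp at h1
  have hinj : Function.Injective fun g : A → ZMod 2 =>
      (⟨fun e => (χ g e, φ e), (hχ g).prodMk hφ, hne g⟩ :
        {φ : E → ZMod 2 × ZMod 3 // G.IsFlow φ ∧ ∀ e : E, φ e ≠ f e}) := by
    intro g g' h
    ext ⟨e, he⟩
    have h1 : χ g e = χ g' e := congrArg Prod.fst (congrFun (congrArg Subtype.val h) e)
    rw [hχS g e (hAS e he), hχS g' e (hAS e he), dif_pos he, dif_pos he] at h1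
    rw [h1]
  have := Nat.card_le_card_of_injective _ hinj
  simpa [Nat.card_fun] using this

end Multigraph

/-- Let `G` be an oriented 3-edge-connected cubic graph with a peripheral cycle `C` on
`q` vertices. For every `f : E → ℤ₂ × ℤ₃` there are at least `2^(2q/3)` flows `φ` with
`φ(e) ≠ f(e)` for every edge `e`. -/
theorem many_flows_from_long_peripheral_cycle {V E : Type} [Fintype V] [Fintype E]
    (G : Multigraph V E) (hG : G.EdgeConnected 3) (hcubic : G.Cubic)
    (C : Set E) (hC : G.IsCycle C) (hCper : G.Peripheral C)
    (q : ℕ) (hq : {v : V | G.touches C v}.ncard = q)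
    (f : E → ZMod 2 × ZMod 3) :
    (2 : ℝ) ^ (2 * (q : ℝ) / 3) ≤
      Nat.card {φ : E → ZMod 2 × ZMod 3 // G.IsFlow φ ∧ ∀ e : E, φ e ≠ f e} := by
  obtain ⟨S, hCS, hS, havoid⟩ := Multigraph.exists_peripheral_superset hG hcubic hC hCper
  obtain ⟨φ, hφ, -, hφS⟩ := havoid fun e => (f e).2
  obtain ⟨ψ, hψ, hψC⟩ := hC.exists_isFlow_support_eq (R := ZMod 3)
  obtain ⟨c, hc⟩ := Multigraph.exists_card_filter_le C.toFinset φ ψ (fun e => (f e).2)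
    fun e he => (hψC e).2 (Set.mem_toFinset.1 he)
  have hcard := hS.two_pow_le_card f (hφ.add (hψ.smul c))
    (A := {e ∈ C.toFinset | ¬ φ e + c * ψ e = (f e).2}) ?_ ?_ ?_
  · have hsplit := Finset.card_filter_add_card_filter_not (s := C.toFinset)
      fun e => φ e + c * ψ e = (f e).2
    rw [← Set.ncard_eq_toFinset_card', ← hC.ncard_eq, hq] at hc hsplit
    set k := {e ∈ C.toFinset | ¬ φ e + c * ψ e = (f e).2}.card
    have hk : (2 * q : ℝ) ≤ 3 * k := by
      exact_mod_cast (by omega : 2 * q ≤ 3 * k)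
    calc (2 : ℝ) ^ (2 * (q : ℝ) / 3) ≤ 2 ^ (k : ℝ) :=
          Real.rpow_le_rpow_of_exponent_le one_le_two (by linarith)
      _ = ((2 ^ k : ℕ) : ℝ) := by simp
      _ ≤ _ := by exact_mod_cast hcard
  · intro e he
    have hψe : ψ e = 0 := not_not.1 fun h => he (hCS ((hψC e).1 h))
    simpa [hψe] using hφS e ⟨⟨trivial, trivial⟩, he⟩
  · intro e he
    exact hCS (Set.mem_toFinset.1 (Finset.mem_filter.1 he).1)
  · intro e he
    exact (Finset.mem_filter.1 he).2
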